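/- Let n > 3 be an integer and a, b, c ∈ ℂ with abc ≠ 0. Set e₁ = -((n-1)a)/((n-2)b) and e₂ = n/((n-2)b). Then the discriminant of f(x) = xⁿ + ax^{n-1} + bx^{n-2} + c equals (-1)^{n(n-1)/2} · n^{-1} · ((n-2)bc)^{n-1} · [ n²e₂^{n-1} + (4b²e₂ + 2abe₁ + a²)/c² + (1+(-1)^{n-1})·(an/c)·((e₁/2)² - e₂)^{(n-1)/2} + (n/c)·Σ_{i=0}^{⌊(n-2)/2⌋} (4be₂ + ((n-1)/(n-1-2i))·ae₁) · C(n-2, 2i) · (e₁/2)^{n-2-2i} · ((e₁/2)² - e₂)^{i} ], where the term with exponent (n-1)/2 is present only when n is odd (for n even its coefficient 1+(-1)^{n-1} vanishes). -/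

import Mathlib

open Polynomial Finset

/-- The even part of the binomial expansion, doubled. -/
lemma add_pow_add_sub_pow {R : Type*} [CommRing R] (p q : R) (m : ℕ) :
    (p + q) ^ m + (p - q) ^ m =
      2 * ∑ i ∈ range (m / 2 + 1), (m.choose (2 * i) : R) * p ^ (m - 2 * i) * (q ^ 2) ^ i := by
  have key : (p + q) ^ m + (p - q) ^ m
      = ∑ k ∈ range (m + 1), (1 + (-1) ^ k) * (q ^ k * p ^ (m - k) * (m.choose k : R)) := by
    rw [sub_eq_neg_add, add_comm p q, add_pow, add_pow, ← sum_add_distrib]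
    refine sum_congr rfl fun k _ => ?_
    rw [neg_pow q]
    ring
  rw [key, mul_sum]
  symm
  refine sum_of_injOn (fun i => 2 * i) (fun x _ y _ h => by simpa using h) ?_ ?_ ?_
  · intro i hi
    simp only [coe_range, Set.mem_Iio] at hi ⊢
    omega
  · intro k hk hk'
    rcases Nat.even_or_odd k with ⟨j, hj⟩ | hodd
    · refine absurd ⟨j, ?_, ?_⟩ hk'
      · simp only [coe_range, Set.mem_Iio, mem_range] at hk ⊢
        omega
      · simp only
        omega
    · simp [hodd.neg_one_pow]
  · intro i _
    simp only [pow_mul, neg_one_sq, one_pow]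
    ring

lemma prod_prod_Ioi_neg_one (R : Type*) [CommRing R] (n : ℕ) :
    ∏ i : Fin n, ∏ _j ∈ Ioi i, (-1 : R) = (-1) ^ (n * (n - 1) / 2) := by
  simp only [prod_const, Fin.card_Ioi]
  rw [prod_pow_eq_pow_sum, Fin.sum_univ_eq_sum_range (fun i => n - 1 - i),
    sum_range_reflect (fun i => i), sum_range_id]

/-- The product of the squared differences of the roots of a split monic polynomial,
in terms of the values of the derivative at the roots. -/
lemma prod_sq_sub_eq_prod_eval_derivative {R : Type*} [CommRing R] {n : ℕ} (ξ : Fin n → R) :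
    ∏ p : Fin n × Fin n with p.1 < p.2, (ξ p.1 - ξ p.2) ^ 2
      = (-1) ^ (n * (n - 1) / 2)
        * ∏ i, (derivative (∏ j, (X - C (ξ j)))).eval (ξ i) := by
  have hder (i : Fin n) :
      (derivative (∏ j, (X - C (ξ j)))).eval (ξ i) = ∏ j ∈ {i}ᶜ, (ξ i - ξ j) := by
    rw [derivative_prod_finset, eval_finsetSum, sum_eq_single i]
    · simp [eval_prod, compl_eq_univ_sdiff, sdiff_singleton_eq_erase]
    · intro k _ hk
      rw [eval_mul, eval_prod,
        prod_eq_zero (mem_erase.2 ⟨hk.symm, mem_univ i⟩) (by simp), zero_mul]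
    · simp
  simp only [hder]
  rw [← prod_prod_Ioi_mul_eq_prod_prod_off_diag (fun j i => ξ i - ξ j),
    ← prod_prod_Ioi_neg_one, ← prod_mul_distrib, prod_filter, Fintype.prod_prod_type]
  refine prod_congr rfl fun i _ => ?_
  rw [← prod_mul_distrib, ← prod_filter]
  refine prod_congr (by ext; simp) fun j _ => ?_
  ring

/-- If `r` and `s` are the nonzero critical points of the quadrinomial
`x ^ (m + 3) + a x ^ (m + 2) + b x ^ (m + 1) + c`, the product of the values of its derivative
at its roots is expressed through its values at `r` and `s`. -/
lemma prod_eval_derivative_quadrinomial {m : ℕ} {a b c r s : ℂ} {ξ : Fin (m + 3) → ℂ}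
    (hsum : ((m : ℂ) + 2) * a = -((m + 3) * (r + s)))
    (hprod : ((m : ℂ) + 1) * b = (m + 3) * (r * s))
    (hf : (X ^ (m + 3) + C a * X ^ (m + 2) + C b * X ^ (m + 1) + C c : ℂ[X])
        = ∏ i, (X - C (ξ i))) :
    ∏ i, (derivative (∏ j, (X - C (ξ j)))).eval (ξ i)
      = c ^ m * ((m : ℂ) + 3) ^ (m + 3)
        * ((r ^ (m + 3) + a * r ^ (m + 2) + b * r ^ (m + 1) + c)
          * (s ^ (m + 3) + a * s ^ (m + 2) + b * s ^ (m + 1) + c)) := by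
  have hval (x : ℂ) : ∏ i, (ξ i - x)
      = (-1) ^ (m + 3) * (x ^ (m + 3) + a * x ^ (m + 2) + b * x ^ (m + 1) + c) := by
    have h := congrArg (eval x) hf
    simp only [eval_add, eval_mul, eval_pow, eval_X, eval_C, eval_prod, eval_sub] at h
    rw [h, ← Fin.prod_const (m + 3) (-1 : ℂ), ← prod_mul_distrib]
    exact prod_congr rfl fun i _ => by ring
  have hroots : ∏ i, ξ i = (-1) ^ (m + 3) * c := by simpa using hval 0
  have hder (x : ℂ) : (derivative (∏ j, (X - C (ξ j)))).eval x
      = x ^ m * (m + 3) * ((x - r) * (x - s)) := by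
    rw [← hf]
    simp only [derivative_add, derivative_C_mul, derivative_X_pow, derivative_C, eval_add,
      eval_mul, eval_pow, eval_X, eval_C, Nat.add_sub_cancel, eval_zero]
    push_cast
    linear_combination x ^ (m + 1) * hsum + x ^ m * hprod
  have hsign : ((-1 : ℂ) ^ (m + 3)) ^ m = 1 := by
    rw [← pow_mul]
    exact Even.neg_one_pow (by
      rw [Nat.even_mul]
      rcases Nat.even_or_odd m with h | h
      · exact Or.inr h
      · exact Or.inl (h.add_odd (by decide)))
  have hsq : ((-1 : ℂ) ^ (m + 3)) * (-1) ^ (m + 3) = 1 := by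
    rw [← mul_pow]; simp
  simp only [hder, prod_mul_distrib, prod_pow, hroots, hval, Fin.prod_const, mul_pow, hsign]
  linear_combination c ^ m * ((m : ℂ) + 3) ^ (m + 3)
        * ((r ^ (m + 3) + a * r ^ (m + 2) + b * r ^ (m + 1) + c)
          * (s ^ (m + 3) + a * s ^ (m + 2) + b * s ^ (m + 1) + c)) * hsq

/-- The sum of the two power sums of `p + q` and `p - q` which enters the discriminant. -/
lemma sum_choose_eq_power_sums (m : ℕ) (a B p q : ℂ) :
    (1 + (-1 : ℂ) ^ (m + 2)) * a * (q ^ 2) ^ ((m + 2) / 2)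
      + ∑ i ∈ range ((m + 1) / 2 + 1),
        (2 * B + ((m : ℂ) + 2) / ((m : ℂ) + 2 - 2 * (i : ℂ)) * a * (2 * p))
          * ((m + 1).choose (2 * i) : ℂ) * p ^ (m + 1 - 2 * i) * (q ^ 2) ^ i
      = a * ((p + q) ^ (m + 2) + (p - q) ^ (m + 2))
        + B * ((p + q) ^ (m + 1) + (p - q) ^ (m + 1)) := by
  have hterm : ∀ i ∈ range ((m + 1) / 2 + 1),
      (2 * B + ((m : ℂ) + 2) / ((m : ℂ) + 2 - 2 * (i : ℂ)) * a * (2 * p))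
          * ((m + 1).choose (2 * i) : ℂ) * p ^ (m + 1 - 2 * i) * (q ^ 2) ^ i
        = 2 * a * (((m + 2).choose (2 * i) : ℂ) * p ^ (m + 2 - 2 * i) * (q ^ 2) ^ i)
          + 2 * B * (((m + 1).choose (2 * i) : ℂ) * p ^ (m + 1 - 2 * i) * (q ^ 2) ^ i) := by
    intro i hi
    rw [mem_range] at hi
    obtain ⟨k, hk⟩ : ∃ k, m + 1 = 2 * i + k := ⟨m + 1 - 2 * i, by omega⟩
    have hne : (m : ℂ) + 2 - 2 * i ≠ 0 := by
      have h : (m : ℂ) + 1 = 2 * i + k := by exact_mod_cast hk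
      rw [show (m : ℂ) + 2 - 2 * i = ((k + 1 : ℕ) : ℂ) by push_cast; linear_combination h]
      exact_mod_cast k.succ_ne_zero
    have hchoose : ((m + 2).choose (2 * i) : ℂ)
        = ((m : ℂ) + 2) / ((m : ℂ) + 2 - 2 * i) * ((m + 1).choose (2 * i) : ℂ) := by
      have h := Nat.choose_mul_succ_eq (m + 1) (2 * i)
      have h' := congrArg (Nat.cast (R := ℂ)) h
      rw [Nat.cast_mul, Nat.cast_mul, Nat.cast_sub (by omega)] at h'
      push_cast at h'
      field_simp
      linear_combination -h'
    rw [hchoose, show m + 2 - 2 * i = (m + 1 - 2 * i) + 1 by omega]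
    ring
  rw [sum_congr rfl hterm, sum_add_distrib, ← mul_sum, ← mul_sum, add_pow_add_sub_pow,
    add_pow_add_sub_pow]
  rcases Nat.even_or_odd' m with ⟨k, rfl | rfl⟩
  · rw [show (2 * k + 2) / 2 = k + 1 by omega, show (2 * k + 1) / 2 = k by omega,
      sum_range_succ _ (k + 1), show 2 * (k + 1) = 2 * k + 2 by ring,
      Even.neg_one_pow ⟨k + 1, by ring⟩]
    simp only [Nat.choose_self, Nat.sub_self, pow_zero, Nat.cast_one]
    ring
  · rw [show (2 * k + 1 + 2) / 2 = k + 1 by omega, show (2 * k + 1 + 1) / 2 = k + 1 by omega,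
      Odd.neg_one_pow ⟨k + 1, by ring⟩]
    ring

/-- **Discriminant of `x^n + a x^{n-1} + b x^{n-2} + c`** (Corollary 3.3).
For a monic polynomial `f` over `ℂ` with roots `ξ₁, …, ξ_n` (with multiplicity),
the discriminant is `∏_{i<j} (ξ i - ξ j)^2`. -/
theorem discriminant_quadrinomial_x_pow_n_add_ax_pow_n_sub_one_add_bx_pow_n_sub_two
    (n : ℕ) (hn : 3 < n) (a b c : ℂ) (habc : a * b * c ≠ 0)
    (e₁ e₂ : ℂ)
    (he₁ : e₁ = -(((n : ℂ) - 1) * a) / (((n : ℂ) - 2) * b))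
    (he₂ : e₂ = (n : ℂ) / (((n : ℂ) - 2) * b))
    (ξ : Fin n → ℂ)
    (hf : (X ^ n + C a * X ^ (n - 1) + C b * X ^ (n - 2) + C c : ℂ[X])
        = ∏ i : Fin n, (X - C (ξ i))) :
    (∏ p ∈ Finset.univ.filter (fun p : Fin n × Fin n => p.1 < p.2),
        (ξ p.1 - ξ p.2) ^ 2)
      = (-1 : ℂ) ^ (n * (n - 1) / 2) * (n : ℂ)⁻¹
          * (((n : ℂ) - 2) * b * c) ^ (n - 1)
          * ((n : ℂ) ^ 2 * e₂ ^ (n - 1)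
            + (4 * b ^ 2 * e₂ + 2 * a * b * e₁ + a ^ 2) / c ^ 2
            + (1 + (-1 : ℂ) ^ (n - 1)) * (a * (n : ℂ) / c)
                * ((e₁ / 2) ^ 2 - e₂) ^ ((n - 1) / 2)
            + ((n : ℂ) / c) * ∑ i ∈ Finset.range ((n - 2) / 2 + 1),
                (4 * b * e₂ + ((n : ℂ) - 1) / ((n : ℂ) - 1 - 2 * (i : ℂ)) * a * e₁)
                  * (Nat.choose (n - 2) (2 * i) : ℂ)
                  * (e₁ / 2) ^ (n - 2 - 2 * i)
                  * ((e₁ / 2) ^ 2 - e₂) ^ i) := by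
  obtain ⟨m, rfl⟩ : ∃ m, n = m + 3 := ⟨n - 3, by omega⟩
  have hb : b ≠ 0 := fun h => habc (by simp [h])
  have hc : c ≠ 0 := fun h => habc (by simp [h])
  have hm1 : (m : ℂ) + 1 ≠ 0 := by exact_mod_cast m.succ_ne_zero
  have hm3 : (m : ℂ) + 3 ≠ 0 := by exact_mod_cast (m + 2).succ_ne_zero
  simp only [show m + 3 - 1 = m + 2 by omega, show m + 3 - 2 = m + 1 by omega] at hf ⊢
  push_cast at he₁ he₂ ⊢
  simp only [show (m : ℂ) + 3 - 1 = m + 2 by ring, show (m : ℂ) + 3 - 2 = m + 1 by ring]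
    at he₁ he₂ ⊢
  -- `u` and `v` are the reciprocals of the two nonzero critical points.
  obtain ⟨q, hq⟩ := IsAlgClosed.exists_pow_nat_eq ((e₁ / 2) ^ 2 - e₂) (n := 2) (by norm_num)
  obtain ⟨u, hu⟩ : ∃ u, u = e₁ / 2 + q := ⟨_, rfl⟩
  obtain ⟨v, hv⟩ : ∃ v, v = e₁ / 2 - q := ⟨_, rfl⟩
  have huv : u + v = e₁ := by rw [hu, hv]; ring
  have huv' : u * v = e₂ := by rw [hu, hv]; linear_combination -hq
  have he₂0 : e₂ ≠ 0 := by rw [he₂]; exact div_ne_zero hm3 (mul_ne_zero hm1 hb)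
  have hu0 : u ≠ 0 := left_ne_zero_of_mul (huv' ▸ he₂0)
  have hv0 : v ≠ 0 := right_ne_zero_of_mul (huv' ▸ he₂0)
  have hB : ((m : ℂ) + 1) * b * (u * v) = m + 3 := by rw [huv', he₂]; field_simp
  have hA : ((m : ℂ) + 2) * a = -((m + 1) * b * (u + v)) := by rw [huv, he₁]; field_simp
  have hcrit {x y : ℂ} (hx : x ≠ 0) (hB : ((m : ℂ) + 1) * b * (x * y) = m + 3)
      (hA : ((m : ℂ) + 2) * a = -((m + 1) * b * (x + y))) :
      (m + 3) * (x⁻¹ ^ (m + 3) + a * x⁻¹ ^ (m + 2) + b * x⁻¹ ^ (m + 1) + c) * x ^ (m + 2)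
        = a + 2 * b * x + (m + 3) * c * x ^ (m + 2) := by
    have hquad : (m + 3 : ℂ) + (m + 2) * a * x + (m + 1) * b * x ^ 2 = 0 := by
      linear_combination x * hA - hB
    have hexp : (x⁻¹ ^ (m + 3) + a * x⁻¹ ^ (m + 2) + b * x⁻¹ ^ (m + 1)) * x ^ (m + 2)
        = x⁻¹ * (1 + a * x + b * x ^ 2) := by
      simp only [inv_pow]
      field_simp
      ring
    have hlin : (m + 3 : ℂ) * (x⁻¹ * (1 + a * x + b * x ^ 2)) = a + 2 * b * x := by
      field_simp
      linear_combination hquad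
    linear_combination (m + 3 : ℂ) * hexp + hlin
  have hr := hcrit hu0 hB hA
  have hs := hcrit (x := v) (y := u) hv0 (by linear_combination hB) (by linear_combination hA)
  rw [prod_sq_sub_eq_prod_eval_derivative,
    prod_eval_derivative_quadrinomial (r := u⁻¹) (s := v⁻¹) ?_ ?_ hf]
  · have hsums := sum_choose_eq_power_sums m a (2 * b * e₂) (e₁ / 2) q
    rw [← hu, ← hv, hq] at hsums
    have hsum' : ∑ i ∈ range ((m + 1) / 2 + 1),
        (4 * b * e₂ + ((m : ℂ) + 2) / ((m : ℂ) + 2 - 2 * (i : ℂ)) * a * e₁)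
          * ((m + 1).choose (2 * i) : ℂ) * (e₁ / 2) ^ (m + 1 - 2 * i)
          * ((e₁ / 2) ^ 2 - e₂) ^ i
        = a * (u ^ (m + 2) + v ^ (m + 2)) + 2 * b * e₂ * (u ^ (m + 1) + v ^ (m + 1))
          - (1 + (-1 : ℂ) ^ (m + 2)) * a * ((e₁ / 2) ^ 2 - e₂) ^ ((m + 2) / 2) := by
      rw [← hsums, add_sub_cancel_left]
      exact sum_congr rfl fun i _ => by ring
    rw [hsum']
    generalize u⁻¹ ^ (m + 3) + a * u⁻¹ ^ (m + 2) + b * u⁻¹ ^ (m + 1) + c = F at hr ⊢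
    generalize v⁻¹ ^ (m + 3) + a * v⁻¹ ^ (m + 2) + b * v⁻¹ ^ (m + 1) + c = G at hs ⊢
    have hmul := congrArg₂ (· * ·) hr hs
    have hpow : (((m : ℂ) + 1) * b) ^ (m + 2) * (u ^ (m + 2) * v ^ (m + 2))
        = (m + 3) ^ (m + 2) := by rw [← mul_pow, ← mul_pow, hB]
    have hbracket : ((m : ℂ) + 3) ^ 2 * e₂ ^ (m + 2)
        + (4 * b ^ 2 * e₂ + 2 * a * b * e₁ + a ^ 2) / c ^ 2
        + (1 + (-1 : ℂ) ^ (m + 2)) * (a * (m + 3) / c)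
            * ((e₁ / 2) ^ 2 - e₂) ^ ((m + 2) / 2)
        + (m + 3) / c * (a * (u ^ (m + 2) + v ^ (m + 2))
          + 2 * b * e₂ * (u ^ (m + 1) + v ^ (m + 1))
          - (1 + (-1 : ℂ) ^ (m + 2)) * a * ((e₁ / 2) ^ 2 - e₂) ^ ((m + 2) / 2))
        = (m + 3) ^ 2 * (F * G) * (u ^ (m + 2) * v ^ (m + 2)) / c ^ 2 := by
      rw [← huv', ← huv, mul_pow]
      generalize (((u + v) / 2) ^ 2 - u * v) ^ ((m + 2) / 2) = D
      field_simp
      linear_combination -hmul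
    rw [hbracket, show m + 3 - 1 = m + 2 by omega]
    have hfinal : ((m : ℂ) + 3)⁻¹ * ((m + 1) * b * c) ^ (m + 2)
        * ((m + 3) ^ 2 * (F * G) * (u ^ (m + 2) * v ^ (m + 2)) / c ^ 2)
        = c ^ m * (m + 3) * (F * G)
          * (((m + 1) * b) ^ (m + 2) * (u ^ (m + 2) * v ^ (m + 2))) := by
      rw [mul_pow _ c, pow_add c]
      field_simp
    rw [hpow] at hfinal
    linear_combination -(-1) ^ ((m + 3) * (m + 2) / 2) * hfinal
  · field_simp
    linear_combination u * v * hA - (u + v) * hB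
  · field_simp
    linear_combination hB
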